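/- Let F be a monotone hazard rate probability distribution supported on the non-negative reals with density f and strictly increasing virtual valuation φ, and let R*_F = φ⁻¹(0)·(1−F(φ⁻¹(0))). Then for every z ≥ 0, φ⁻¹(z)·(1−F(φ⁻¹(z))) + F(φ⁻¹(z))·R*_F ≥ (1/e)·(φ⁻¹(z)−z)·(1−F(φ⁻¹(z))) + (1/e)·z·(1−F(z)) + R*_F·(1 − 1/e + F(z)/e). -/

import Mathlib

open MeasureTheory Real Set

/-! Write `p = φ⁻¹(z)` and `R = R*_F`. Subtracting `R` from both sides and multiplying by `e` turns
the claim into `(p - z)(1 - F p) + (z - R)(1 - F z) ≤ e (p - R)(1 - F p)`. On `[z, p]` the hazard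
rate is at most its value at `p`, which is `1 / (p - z)`; hence the survival function `1 - F` drops
by a factor of at most `e` between `z` and `p`. If `R ≤ z`, this bounds `1 - F z` in the second
summand; if `z ≤ R`, that summand is nonpositive and `1 - F p ≤ 1 - F z` suffices. -/

/-- The hazard rate `f / (1 - F)` of a distribution with density `f` and distribution function `F`.
It takes the junk value `0` where `F = 1`. -/
noncomputable def hazardRate (f F : ℝ → ℝ) (x : ℝ) : ℝ := f x / (1 - F x)

/-- Myerson's virtual valuation `φ(x) = x - (1 - F x) / f x` of a distribution with density `f` and
distribution function `F`. It takes the junk value `x` where `f x = 0`. -/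
noncomputable def virtualValuation (f F : ℝ → ℝ) (x : ℝ) : ℝ := x - (1 - F x) / f x

theorem hasDerivWithinAt_Ici_of_eqOn_integral {f F : ℝ → ℝ} {a x : ℝ}
    (hf : ContinuousOn f (Ici a)) (hF : EqOn F (fun y ↦ ∫ t in a..y, f t) (Ici a))
    (hx : x ∈ Ici a) : HasDerivWithinAt F (f x) (Ici a) x := by
  have hcont : Continuous fun t ↦ f (max a t) :=
    hf.comp_continuous (by fun_prop) fun t ↦ le_max_left a t
  have hderiv := (hcont.integral_hasStrictDerivAt a x).hasDerivAt.hasDerivWithinAt (s := Ici a)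
  rw [max_eq_right hx] at hderiv
  have hextend : EqOn F (fun y ↦ ∫ t in a..y, f (max a t)) (Ici a) := fun y hy ↦ by
    refine (hF hy).trans (intervalIntegral.integral_congr fun t ht ↦ ?_)
    rw [uIcc_of_le hy] at ht
    simp only [max_eq_right ht.1]
  exact hderiv.congr hextend (hextend hx)

section Survival

variable {f F : ℝ → ℝ} {s : Set ℝ} {p : ℝ}

theorem monotoneOn_of_forall_hasDerivWithinAt_nonneg (hs : Convex ℝ s)
    (hF : ∀ x ∈ s, HasDerivWithinAt F (f x) s x) (hf : ∀ x ∈ s, 0 ≤ f x) : MonotoneOn F s :=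
  monotoneOn_of_hasDerivWithinAt_nonneg hs (fun x hx ↦ (hF x hx).continuousWithinAt)
    (fun x hx ↦ (hF x (interior_subset hx)).mono interior_subset)
    fun x hx ↦ hf x (interior_subset hx)

theorem monotoneOn_exp_mul_one_sub_of_hazardRate_le {c : ℝ} (hs : Convex ℝ s)
    (hF : ∀ x ∈ s, HasDerivWithinAt F (f x) s x) (hF_lt : ∀ x ∈ s, F x < 1)
    (hc : ∀ x ∈ s, hazardRate f F x ≤ c) :
    MonotoneOn (fun x ↦ exp (c * x) * (1 - F x)) s := by
  have hderiv : ∀ x ∈ s, HasDerivWithinAt (fun x ↦ exp (c * x) * (1 - F x))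
      (exp (c * x) * (c * (1 - F x) - f x)) s x := fun x hx ↦ by
    have hexp : HasDerivWithinAt (fun x ↦ exp (c * x)) (exp (c * x) * (c * 1)) s x :=
      ((hasDerivWithinAt_id x s).const_mul c).exp
    exact (hexp.mul ((hF x hx).const_sub 1)).congr_deriv (by ring)
  refine monotoneOn_of_forall_hasDerivWithinAt_nonneg hs hderiv fun x hx ↦ ?_
  have hdensity : f x ≤ c * (1 - F x) := (div_le_iff₀ (sub_pos.2 (hF_lt x hx))).1 (hc x hx)
  exact mul_nonneg (exp_pos _).le (sub_nonneg.2 hdensity)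

theorem hazardRate_mul_sub_virtualValuation (hf : f p ≠ 0) (hF : F p ≠ 1) :
    hazardRate f F p * (p - virtualValuation f F p) = 1 := by
  have hsurvival : 1 - F p ≠ 0 := sub_ne_zero.2 hF.symm
  rw [hazardRate, virtualValuation, sub_sub_cancel]
  field_simp

theorem virtualValuation_lt_self (hf : 0 < f p) (hF : F p < 1) : virtualValuation f F p < p :=
  sub_lt_self p (div_pos (sub_pos.2 hF) hf)

theorem one_sub_virtualValuation_le (hs : Convex ℝ s)
    (hF : ∀ x ∈ s, HasDerivWithinAt F (f x) s x) (hF_lt : ∀ x ∈ s, F x < 1)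
    (hMHR : MonotoneOn (hazardRate f F) s) (hp : p ∈ s) (hfp : 0 < f p)
    (hv : virtualValuation f F p ∈ s) :
    1 - F (virtualValuation f F p) ≤ exp 1 * (1 - F p) := by
  set v := virtualValuation f F p
  set c := hazardRate f F p
  have hvp : v ≤ p := (virtualValuation_lt_self hfp (hF_lt p hp)).le
  have hmono : MonotoneOn (fun x ↦ exp (c * x) * (1 - F x)) (s ∩ Iic p) :=
    monotoneOn_exp_mul_one_sub_of_hazardRate_le (hs.inter (convex_Iic p))
      (fun x hx ↦ (hF x hx.1).mono inter_subset_left) (fun x hx ↦ hF_lt x hx.1)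
      fun x hx ↦ hMHR hx.1 hp hx.2
  have hexponent : c * p = c * v + 1 := by
    have : c * (p - v) = 1 := hazardRate_mul_sub_virtualValuation hfp.ne' (hF_lt p hp).ne
    linarith
  refine le_of_mul_le_mul_left ?_ (exp_pos (c * v))
  calc exp (c * v) * (1 - F v) ≤ exp (c * p) * (1 - F p) := hmono ⟨hv, hvp⟩ ⟨hp, self_mem_Iic⟩ hvp
    _ = exp (c * v) * (exp 1 * (1 - F p)) := by rw [hexponent, exp_add, mul_assoc]

end Survival

theorem sub_mul_add_sub_mul_le {𝕜 : Type*} [CommRing 𝕜] [LinearOrder 𝕜] [IsStrictOrderedRing 𝕜]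
    {z p r S T k : 𝕜} (hzp : z ≤ p) (hrp : r ≤ p) (hST : S ≤ T) (hTS : T ≤ k * S) :
    (p - z) * S + (z - r) * T ≤ k * ((p - r) * S) := by
  have hSk : S ≤ k * S := hST.trans hTS
  rcases le_total r z with hrz | hzr
  · calc (p - z) * S + (z - r) * T ≤ (p - z) * (k * S) + (z - r) * (k * S) :=
          add_le_add (mul_le_mul_of_nonneg_left hSk (sub_nonneg.2 hzp))
            (mul_le_mul_of_nonneg_left hTS (sub_nonneg.2 hrz))
      _ = k * ((p - r) * S) := by ring
  · calc (p - z) * S + (z - r) * T ≤ (p - z) * S + (z - r) * S :=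
          add_le_add_right (mul_le_mul_of_nonpos_left hST (sub_nonpos.2 hzr)) _
      _ = (p - r) * S := by ring
      _ ≤ (p - r) * (k * S) := mul_le_mul_of_nonneg_left hSk (sub_nonneg.2 hrp)
      _ = k * ((p - r) * S) := by ring

theorem stmt_8
(f F : ℝ → ℝ)
    (hf_cont : ContinuousOn f (Ici 0))
    (hf_pos : ∀ z ∈ Ici (0:ℝ), 0 < f z)
    (hF : ∀ z ∈ Ici (0:ℝ), F z = ∫ t in (0:ℝ)..z, f t)
    (hF_lt : ∀ z ∈ Ici (0:ℝ), F z < 1)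
    (hprob : ∫ z in Ioi (0:ℝ), f z = 1)
(hMHR : ∀ y z : ℝ, 0 ≤ y → y ≤ z → f y / (1 - F y) ≤ f z / (1 - F z))
(φ ψ : ℝ → ℝ)
    (hφ : ∀ z ∈ Ici (0:ℝ), φ z = z - (1 - F z) / f z)
    (hφ_mono : StrictMonoOn φ (Ici 0))
    (hφ_top : Filter.Tendsto φ Filter.atTop Filter.atTop)
    (hψ : ∀ y ∈ Ici (0:ℝ), ψ y ∈ Ici (0:ℝ) ∧ φ (ψ y) = y) :
    ∀ z : ℝ, 0 ≤ z →
      ψ z * (1 - F (ψ z)) + F (ψ z) * (ψ 0 * (1 - F (ψ 0)))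
      ≥ (1 / Real.exp 1) * (ψ z - z) * (1 - F (ψ z))
        + (1 / Real.exp 1) * z * (1 - F z)
        + (ψ 0 * (1 - F (ψ 0))) * (1 - 1 / Real.exp 1 + F z / Real.exp 1) := by
  intro z hz
  obtain ⟨hp, hφp⟩ := hψ z hz
  obtain ⟨hq, hφq⟩ := hψ 0 self_mem_Ici
  set p := ψ z
  set q := ψ 0
  set R := q * (1 - F q)
  have hv : virtualValuation f F p = z := (hφ p hp).symm.trans hφp
  have hF' : ∀ x ∈ Ici 0, HasDerivWithinAt F (f x) (Ici 0) x := fun x hx ↦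
    hasDerivWithinAt_Ici_of_eqOn_integral hf_cont hF hx
  have hF_mono : MonotoneOn F (Ici 0) :=
    monotoneOn_of_forall_hasDerivWithinAt_nonneg (convex_Ici 0) hF' fun x hx ↦ (hf_pos x hx).le
  have hFq : 0 ≤ F q := by simpa [hF 0 self_mem_Ici] using hF_mono self_mem_Ici hq hq
  have hRp : R ≤ p := (mul_le_of_le_one_right hq (sub_le_self 1 hFq)).trans <|
    (hφ_mono.le_iff_le hq hp).1 (by rwa [hφq, hφp])
  have hzp : z ≤ p := hv ▸ (virtualValuation_lt_self (hf_pos p hp) (hF_lt p hp)).le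
  have hsurvival : 1 - F z ≤ exp 1 * (1 - F p) := by
    simpa only [hv] using one_sub_virtualValuation_le (convex_Ici 0) hF' hF_lt
      (fun y hy x _ hyx ↦ hMHR y x hy hyx) hp (hf_pos p hp) (hv ▸ hz)
  have hgap := sub_mul_add_sub_mul_le hzp hRp (sub_le_sub_left (hF_mono hz hp hzp) 1) hsurvival
  rw [← div_le_iff₀' (exp_pos 1)] at hgap
  calc _ = (p - R) * (1 - F p) + R := by ring
    _ ≥ ((p - z) * (1 - F p) + (z - R) * (1 - F z)) / exp 1 + R := by gcongr
    _ = _ := by ring
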